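/- Let ξ and π be pdfs on ℝ with ξ ASU(0) and ξ ⪰_m π, let μ be a pdf on ℝ that is ASU(0), and let a ∈ ℝ with a ≠ 0. Define ξ̃(x) := (1/|a|) ξ(x/a) and π̃(x) := (1/|a|) π(x/a). Then ξ̃ ⋆ μ is ASU(0) and (ξ̃ ⋆ μ) ⪰_m (π̃ ⋆ μ), where (f ⋆ μ)(x) = ∫_ℝ f(x − w) μ(w) dw. -/

import Mathlib

open MeasureTheory Set
open scoped ENNReal NNReal

noncomputable section

/-- A probability density function on ℝ: measurable, nonnegative (via `ℝ≥0`),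
integrating to one against Lebesgue measure. -/
def IsPdf (f : ℝ → ℝ≥0) : Prop :=
  Measurable f ∧ ∫⁻ x, (f x : ℝ≥0∞) = 1

/-- `f` is symmetric and unimodal about `c`. -/
def ASU (c : ℝ) (f : ℝ → ℝ≥0) : Prop :=
  (∀ x, f (c - x) = f (c + x)) ∧ MonotoneOn f (Iic c) ∧ AntitoneOn f (Ici c)

/-- A distortion function: measurable, even, nondecreasing on `[0, ∞)`. -/
def IsDistortion (d : ℝ → ℝ≥0∞) : Prop :=
  Measurable d ∧ (∀ x, d (-x) = d x) ∧ MonotoneOn d (Ici (0 : ℝ))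

/-- Symmetric decreasing rearrangement of an `ℝ≥0∞`-valued function:
`f^σ(x) = ∫_0^∞ 1[2|x| < vol{z : f z > ρ}] dρ`. -/
def sdr (f : ℝ → ℝ≥0∞) (x : ℝ) : ℝ≥0∞ :=
  ∫⁻ ρ in Ioi (0 : ℝ),
    if ENNReal.ofReal (2 * |x|) < volume {z : ℝ | ENNReal.ofReal ρ < f z} then 1 else 0

/-- Symmetric decreasing rearrangement of an `ℝ≥0`-valued function. -/
def sdr' (f : ℝ → ℝ≥0) : ℝ → ℝ≥0∞ := sdr fun x => (f x : ℝ≥0∞)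

/-- `ξ` majorizes `π`: `∫_{-ρ}^{ρ} ξ^σ ≥ ∫_{-ρ}^{ρ} π^σ` for all `ρ ≥ 0`. -/
def Majorizes (ξ π : ℝ → ℝ≥0) : Prop :=
  ∀ ρ : ℝ, 0 ≤ ρ → ∫⁻ x in Ioo (-ρ) ρ, sdr' π x ≤ ∫⁻ x in Ioo (-ρ) ρ, sdr' ξ x

/-- Symmetric and unimodal about `c`, for `[0,∞]`-valued functions. -/
def ASUE (c : ℝ) (f : ℝ → ℝ≥0∞) : Prop :=
  (∀ x, f (c - x) = f (c + x)) ∧ MonotoneOn f (Iic c) ∧ AntitoneOn f (Ici c)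

/-- Majorization for `[0,∞]`-valued densities. -/
def MajorizesE (ξ π : ℝ → ℝ≥0∞) : Prop :=
  ∀ ρ : ℝ, 0 ≤ ρ → ∫⁻ x in Ioo (-ρ) ρ, sdr π x ≤ ∫⁻ x in Ioo (-ρ) ρ, sdr ξ x

/-
Through layers, the integral of `f^σ` over `(-ρ, ρ)` is `∫ min(2ρ, |{f > u}|) du`, which for
`ρ > 0` is the infimum over `t ≥ 0` of `2ρt + ∫ (f - t)⁺`. Hence majorization is the comparison of
the excesses `∫ (f - t)⁺`. This makes it stable under dilations, and by the Hardy–Littlewood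
inequality two majorizations `F ⪰ f`, `G ⪰ g` with symmetric unimodal `F`, `G` give
`∫ f g ≤ ∫ F G`.

The excess of `y ↦ |E ∩ (y - r, y + r)| = Φ(y + r) - Φ(y - r)`, where `Φ(x) = |E ∩ (-∞, x]|`, is
the area of the region `Φ(y - r) < s < Φ(y + r) - t`. As `Φ` is monotone and 1-Lipschitz with values
in `[0, |E|]`, this region has height at most `|E| - t` and its horizontal slices have length at
most `2r - t`, with equality when `E` is an interval. So `E` is majorized by the centred interval
`E*` of the same measure after convolution with any centred interval. Splitting `g` into layers and
pairing with `F ⪰ f` gives `∫_E f ⋆ g ≤ ∫_{E*} F ⋆ g` for every `E` of finite measure.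
-/

section Layers

variable {α : Type*} [MeasurableSpace α] {μ : Measure α} {f g F : α → ℝ≥0∞}

/-- The distribution function of `f`, giving the measure of the superlevel set of each level;
negative levels count as `0`. -/
def distr (μ : Measure α) (f : α → ℝ≥0∞) (u : ℝ) : ℝ≥0∞ := μ {z | ENNReal.ofReal u < f z}

/-- The integral of the decreasing rearrangement of `f` over `[0, s]`, written through its layers.
On an atomless space it is the supremum of the masses that `f` puts on sets of measure at most
`s`. -/
def topMass (μ : Measure α) (f : α → ℝ≥0∞) (s : ℝ≥0∞) : ℝ≥0∞ :=
  ∫⁻ u in Ioi (0 : ℝ), min s (distr μ f u)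

lemma distr_antitone (μ : Measure α) (f : α → ℝ≥0∞) : Antitone (distr μ f) := fun _ _ h =>
  measure_mono fun _ hz => (ENNReal.ofReal_le_ofReal h).trans_lt hz

@[fun_prop]
lemma measurable_distr (μ : Measure α) (f : α → ℝ≥0∞) : Measurable (distr μ f) :=
  (distr_antitone μ f).measurable

lemma measurableSet_ofReal_lt (hf : Measurable f) (u : ℝ) :
    MeasurableSet {z | ENNReal.ofReal u < f z} :=
  measurableSet_lt measurable_const hf

lemma volume_Ioi_inter_ofReal_lt (t : ℝ≥0) (c : ℝ≥0∞) :
    volume (Ioi (t : ℝ) ∩ {u | ENNReal.ofReal u < c}) = c - t := by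
  induction c with
  | top => simp
  | coe c =>
    have : Ioi (t : ℝ) ∩ {u | ENNReal.ofReal u < c} = Ioo (t : ℝ) c := by
      ext u
      refine and_congr_right fun hu => ?_
      rw [mem_ofPred_eq, ← ENNReal.ofReal_coe_nnreal,
        ENNReal.ofReal_lt_ofReal_iff_of_nonneg (t.2.trans hu.le)]
    rw [this, Real.volume_Ioo, ENNReal.ofReal_sub _ t.coe_nonneg, ENNReal.ofReal_coe_nnreal,
      ENNReal.ofReal_coe_nnreal]

lemma lintegral_Ioi_distr [SFinite μ] (hf : Measurable f) (t : ℝ≥0) :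
    ∫⁻ u in Ioi (t : ℝ), distr μ f u = ∫⁻ z, (f z - t) ∂μ := by
  have hS : MeasurableSet {p : ℝ × α | ENNReal.ofReal p.1 < f p.2} :=
    measurableSet_lt (by fun_prop) (by fun_prop)
  calc ∫⁻ u in Ioi (t : ℝ), distr μ f u
      = ((volume.restrict (Ioi (t : ℝ))).prod μ) {p | ENNReal.ofReal p.1 < f p.2} :=
        (Measure.prod_apply hS).symm
    _ = ∫⁻ z, (volume.restrict (Ioi (t : ℝ))) {u | ENNReal.ofReal u < f z} ∂μ :=
        Measure.prod_apply_symm hS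
    _ = ∫⁻ z, (f z - t) ∂μ := by
        simp_rw [Measure.restrict_apply' measurableSet_Ioi, inter_comm _ (Ioi _),
          volume_Ioi_inter_ofReal_lt]

lemma lintegral_eq_lintegral_distr [SFinite μ] (hf : Measurable f) :
    ∫⁻ z, f z ∂μ = ∫⁻ u in Ioi (0 : ℝ), distr μ f u := by
  simpa using (lintegral_Ioi_distr hf 0).symm

lemma setLIntegral_eq_lintegral_measure_inter [SFinite μ] (hf : Measurable f) (A : Set α) :
    ∫⁻ z in A, f z ∂μ = ∫⁻ u in Ioi (0 : ℝ), μ ({z | ENNReal.ofReal u < f z} ∩ A) := by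
  simp_rw [lintegral_eq_lintegral_distr hf, distr,
    Measure.restrict_apply (measurableSet_ofReal_lt hf _)]

lemma lintegral_mul_eq_lintegral_setLIntegral [SFinite μ] (hf : Measurable f) (hg : Measurable g) :
    ∫⁻ z, f z * g z ∂μ =
      ∫⁻ u in Ioi (0 : ℝ), ∫⁻ z in {z | ENNReal.ofReal u < g z}, f z ∂μ :=
  calc ∫⁻ z, f z * g z ∂μ = ∫⁻ z, g z ∂μ.withDensity f :=
        (lintegral_withDensity_eq_lintegral_mul _ hf hg).symm
    _ = ∫⁻ u in Ioi (0 : ℝ), μ.withDensity f {z | ENNReal.ofReal u < g z} :=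
        lintegral_eq_lintegral_distr hg
    _ = _ := by simp_rw [withDensity_apply f (measurableSet_ofReal_lt hg _)]

lemma setLIntegral_le_topMass [SFinite μ] (hf : Measurable f) (A : Set α) :
    ∫⁻ z in A, f z ∂μ ≤ topMass μ f (μ A) := by
  rw [setLIntegral_eq_lintegral_measure_inter hf]
  exact lintegral_mono fun u =>
    le_min (measure_mono inter_subset_right) (measure_mono inter_subset_left)

/-- The Hardy–Littlewood rearrangement inequality. -/
lemma lintegral_mul_le_lintegral_topMass [SFinite μ] (hf : Measurable f) (hg : Measurable g) :
    ∫⁻ z, f z * g z ∂μ ≤ ∫⁻ u in Ioi (0 : ℝ), topMass μ f (distr μ g u) := by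
  rw [lintegral_mul_eq_lintegral_setLIntegral hf hg]
  exact lintegral_mono fun u => setLIntegral_le_topMass hf _

lemma measure_inter_superlevel_of_monovary {β γ : Type*} [LinearOrder β] [LinearOrder γ]
    {f : α → β} {g : α → γ} (h : Monovary f g) (u : β) (v : γ) :
    μ ({z | u < f z} ∩ {z | v < g z}) = min (μ {z | u < f z}) (μ {z | v < g z}) := by
  have hnested : {z | u < f z} ⊆ {z | v < g z} ∨ {z | v < g z} ⊆ {z | u < f z} := by
    by_contra! hc
    obtain ⟨⟨x, hxf, hxg⟩, ⟨y, hyg, hyf⟩⟩ := hc.imp not_subset.1 not_subset.1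
    exact hyf (hxf.trans_le (h ((not_lt.1 hxg).trans_lt hyg)))
  rcases hnested with hsub | hsub
  · rw [inter_eq_left.2 hsub, min_eq_left (measure_mono hsub)]
  · rw [inter_eq_right.2 hsub, min_eq_right (measure_mono hsub)]

lemma lintegral_mul_eq_lintegral_topMass_of_monovary [SFinite μ] (hf : Measurable f)
    (hg : Measurable g) (h : Monovary f g) :
    ∫⁻ z, f z * g z ∂μ = ∫⁻ u in Ioi (0 : ℝ), topMass μ f (distr μ g u) := by
  rw [lintegral_mul_eq_lintegral_setLIntegral hf hg]
  refine lintegral_congr fun u => ?_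
  rw [setLIntegral_eq_lintegral_measure_inter hf]
  refine lintegral_congr fun v => ?_
  rw [measure_inter_superlevel_of_monovary h, min_comm, distr, distr]

lemma lintegral_topMass_distr_comm (μ : Measure α) (f g : α → ℝ≥0∞) :
    ∫⁻ u in Ioi (0 : ℝ), topMass μ f (distr μ g u) =
      ∫⁻ u in Ioi (0 : ℝ), topMass μ g (distr μ f u) := by
  unfold topMass
  rw [lintegral_lintegral_swap (by fun_prop)]
  simp_rw [min_comm]

lemma lintegral_Ioi_zero_eq_add (h : ℝ → ℝ≥0∞) (t : ℝ≥0) :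
    ∫⁻ u in Ioi (0 : ℝ), h u = (∫⁻ u in Ioo (0 : ℝ) t, h u) + ∫⁻ u in Ioi (t : ℝ), h u := by
  rw [← Ioc_union_Ioi_eq_Ioi t.2, lintegral_union measurableSet_Ioi (Ioc_disjoint_Ioi le_rfl),
    setLIntegral_congr Ioo_ae_eq_Ioc.symm]
  rfl

lemma topMass_le_mul_add_lintegral_sub [SFinite μ] (hf : Measurable f) (s : ℝ≥0∞) (t : ℝ≥0) :
    topMass μ f s ≤ t * s + ∫⁻ z, (f z - t) ∂μ := by
  rw [topMass, lintegral_Ioi_zero_eq_add _ t, ← lintegral_Ioi_distr hf]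
  gcongr
  · calc ∫⁻ u in Ioo (0 : ℝ) t, min s (distr μ f u) ≤ ∫⁻ _ in Ioo (0 : ℝ) t, s :=
          lintegral_mono fun u => min_le_left _ _
      _ = t * s := by simp [mul_comm]
  · exact min_le_right _ _

lemma topMass_eq_iInf [SFinite μ] (hf : Measurable f) {s : ℝ≥0∞} (hs : s ≠ 0) :
    topMass μ f s = ⨅ t : ℝ≥0, t * s + ∫⁻ z, (f z - t) ∂μ := by
  refine le_antisymm (le_iInf (topMass_le_mul_add_lintegral_sub hf s)) ?_
  by_cases h : ∃ t : ℝ≥0, distr μ f t ≤ s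
  · -- The infimum is attained at the level where the distribution function drops below `s`.
    set S := {t : ℝ≥0 | distr μ f t ≤ s}
    set t := sInf S
    have above : ∀ u ∈ Ioi (t : ℝ), distr μ f u ≤ s := fun u hu => by
      lift u to ℝ≥0 using t.2.trans (le_of_lt hu)
      obtain ⟨v, hv, hvu⟩ := exists_lt_of_csInf_lt h (NNReal.coe_lt_coe.1 hu)
      exact (distr_antitone μ f (NNReal.coe_le_coe.2 hvu.le)).trans hv
    have below : ∀ u ∈ Ioo (0 : ℝ) t, s ≤ distr μ f u := fun u hu => by
      lift u to ℝ≥0 using hu.1.le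
      have huS : u ∉ S := notMem_of_lt_csInf' (NNReal.coe_lt_coe.1 hu.2)
      exact (not_le.1 huS).le
    refine (iInf_le _ t).trans_eq ?_
    rw [topMass, lintegral_Ioi_zero_eq_add _ t, ← lintegral_Ioi_distr hf,
      setLIntegral_congr_fun measurableSet_Ioo fun u hu => min_eq_left (below u hu),
      setLIntegral_congr_fun measurableSet_Ioi fun u hu => min_eq_right (above u hu)]
    simp [mul_comm]
  · push Not at h
    have hmin : ∀ u ∈ Ioi (0 : ℝ), min s (distr μ f u) = s := fun u hu => by
      lift u to ℝ≥0 using le_of_lt hu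
      exact min_eq_left (h u).le
    rw [topMass, setLIntegral_congr_fun measurableSet_Ioi hmin]
    simp [ENNReal.mul_top hs]

lemma topMass_le_of_lintegral_sub_le [SFinite μ] (hf : Measurable f) (hF : Measurable F)
    (h : ∀ t : ℝ≥0, ∫⁻ z, (f z - t) ∂μ ≤ ∫⁻ z, (F z - t) ∂μ) (s : ℝ≥0∞) :
    topMass μ f s ≤ topMass μ F s := by
  rcases eq_or_ne s 0 with rfl | hs
  · simp [topMass]
  · rw [topMass_eq_iInf hf hs, topMass_eq_iInf hF hs]
    exact iInf_mono fun t => add_le_add_right (h t) _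

lemma mul_measure_add_setLIntegral_sub {A : Set α} (hA : MeasurableSet A) {t : ℝ≥0}
    (h : ∀ z ∈ A, t ≤ f z) : t * μ A + ∫⁻ z in A, (f z - t) ∂μ = ∫⁻ z in A, f z ∂μ := by
  rw [← setLIntegral_const, ← lintegral_add_left measurable_const]
  exact setLIntegral_congr_fun hA fun z hz => add_tsub_cancel_of_le (h z hz)

lemma lintegral_sub_le_of_forall_setLIntegral_le_topMass [SigmaFinite μ] (hf : Measurable f)
    (hF : Measurable F)
    (h : ∀ A, MeasurableSet A → μ A ≠ ∞ → ∫⁻ z in A, f z ∂μ ≤ topMass μ F (μ A)) (t : ℝ≥0) :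
    ∫⁻ z, (f z - t) ∂μ ≤ ∫⁻ z, (F z - t) ∂μ := by
  rw [← setLIntegral_univ, ← iUnion_spanningSets μ,
    setLIntegral_iUnion_of_directed _ (monotone_spanningSets μ).directed_le]
  refine iSup_le fun n => ?_
  set A := {z | t < f z} ∩ spanningSets μ n
  have hlevel : MeasurableSet {z | t < f z} := measurableSet_lt measurable_const hf
  have hAfin : μ A ≠ ∞ :=
    measure_ne_top_of_subset inter_subset_right (measure_spanningSets_lt_top μ n).ne
  have hsupp : ∫⁻ z in spanningSets μ n, (f z - t) ∂μ = ∫⁻ z in A, (f z - t) ∂μ := by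
    rw [← setLIntegral_indicator hlevel, indicator_eq_self.2 fun z hz => ?_]
    exact tsub_pos_iff_lt.1 (pos_iff_ne_zero.2 hz)
  have hAm : MeasurableSet A := hlevel.inter (measurableSet_spanningSets μ n)
  rw [hsupp, ← ENNReal.add_le_add_iff_left (ENNReal.mul_ne_top ENNReal.coe_ne_top hAfin),
    mul_measure_add_setLIntegral_sub hAm fun z hz => le_of_lt hz.1]
  exact (h A hAm hAfin).trans (topMass_le_mul_add_lintegral_sub hF _ t)

end Layers

lemma ASU.asue {c : ℝ} {f : ℝ → ℝ≥0} (hf : ASU c f) : ASUE c fun x => f x :=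
  ⟨fun x => congrArg _ (hf.1 x), ENNReal.coe_mono.comp_monotoneOn hf.2.1,
    ENNReal.coe_mono.comp_antitoneOn hf.2.2⟩

lemma asue_iff {c : ℝ} {f : ℝ → ℝ≥0∞} : ASUE c f ↔ ∀ x y, |x - c| ≤ |y - c| → f y ≤ f x := by
  refine ⟨fun hf x y hxy => ?_, fun hf => ⟨fun x => ?_,
    fun x (hx : x ≤ c) y (hy : y ≤ c) hxy => hf y x ?_,
    fun x (hx : c ≤ x) y (hy : c ≤ y) hxy => hf x y ?_⟩⟩
  · have hfold (z : ℝ) : f (c + |z - c|) = f z := by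
      rcases abs_choice (z - c) with h | h <;> rw [h]
      · rw [add_sub_cancel]
      · rw [← hf.1, sub_neg_eq_add, add_sub_cancel]
    rw [← hfold x, ← hfold y]
    exact hf.2.2 (by simp) (by simp) (by gcongr)
  · exact le_antisymm (hf _ _ (by simp)) (hf _ _ (by simp))
  · rw [abs_of_nonpos (sub_nonpos.2 hx), abs_of_nonpos (sub_nonpos.2 hy)]
    linarith
  · rw [abs_of_nonneg (sub_nonneg.2 hx), abs_of_nonneg (sub_nonneg.2 hy)]
    linarith

section SymmetricUnimodal

variable {c : ℝ} {f g : ℝ → ℝ≥0∞}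

lemma ASUE.measurable (hf : ASUE c f) : Measurable f := by
  have hanti : Antitone fun r : ℝ => f (c + max r 0) := fun r s hrs =>
    hf.2.2 (by simp) (by simp) (by gcongr)
  have hcomp : f = (fun r : ℝ => f (c + max r 0)) ∘ fun x => |x - c| := by
    ext x
    exact le_antisymm (asue_iff.1 hf _ _ (by simp)) (asue_iff.1 hf _ _ (by simp))
  rw [hcomp]
  exact hanti.measurable.comp (by fun_prop)

lemma ASUE.comp_neg_add (hf : ASUE c f) (y : ℝ) : ASUE (y + c) fun x => f (-y + x) :=
  asue_iff.2 fun x z hxz => by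
    rw [← sub_sub, ← sub_sub, sub_eq_neg_add x, sub_eq_neg_add z] at hxz
    exact asue_iff.1 hf _ _ hxz

lemma ASUE.comp_neg_add_left (hf : ASUE c f) (x : ℝ) : ASUE (x - c) fun y => f (-y + x) :=
  asue_iff.2 fun y z hyz => by
    have hreflect (w : ℝ) : |-w + x - c| = |w - (x - c)| := by
      rw [abs_sub_comm w]
      ring_nf
    exact asue_iff.1 hf _ _ (by rwa [hreflect, hreflect])

lemma ASUE.monovary (hf : ASUE c f) (hg : ASUE c g) : Monovary f g := fun _ _ hxy =>
  asue_iff.1 hf _ _ (le_of_not_ge fun h => hxy.not_ge (asue_iff.1 hg _ _ h))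

lemma ASUE.superlevel_ae_eq_eball (hf : ASUE c f) (t : ℝ≥0∞) :
    {x | t < f x} =ᵐ[volume] Metric.eball c (volume {x | t < f x} / 2) := by
  set A := {x | t < f x}
  set R := ⨆ x ∈ A, edist x c
  have hball : Metric.eball c R ⊆ A := fun x hx => by
    obtain ⟨y, hyA, hxy⟩ := lt_biSup_iff.1 (Metric.mem_eball.1 hx)
    refine lt_of_lt_of_le hyA (asue_iff.1 hf _ _ ?_)
    rw [edist_dist, edist_dist] at hxy
    exact (ENNReal.ofReal_lt_ofReal_iff'.1 hxy).1.le
  have hclosedBall : A ⊆ Metric.closedEBall c R := fun x hx => le_biSup (edist · c) hx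
  have hvol : volume A = 2 * R :=
    le_antisymm ((measure_mono hclosedBall).trans_eq (Real.volume_closedEBall c R))
      ((Real.volume_eball c R).symm.trans_le (measure_mono hball))
  rw [hvol, mul_comm, ENNReal.mul_div_cancel_right two_ne_zero ENNReal.ofNat_ne_top]
  rcases eq_or_ne R ∞ with hR | hR
  · rw [hR, Metric.eball_top_eq_univ] at hball ⊢
    rw [univ_subset_iff.1 hball]
    rfl
  · refine (ae_eq_of_subset_of_measure_ge hball ?_ measurableSet_eball.nullMeasurableSet ?_).symm
    · rw [hvol, Real.volume_eball]
    · rw [hvol]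
      exact ENNReal.mul_ne_top ENNReal.ofNat_ne_top hR

end SymmetricUnimodal

lemma volume_eball_inter_eball (a b : ℝ) (q r : ℝ≥0∞) :
    volume (Metric.eball a q ∩ Metric.eball b r) =
      min (min (2 * q) (2 * r)) (q + r - edist a b) := by
  induction q with
  | top => simp [ENNReal.top_sub (edist_ne_top a b)]
  | coe q =>
    induction r with
    | top => simp [ENNReal.top_sub (edist_ne_top a b)]
    | coe r =>
      have hinter : volume (Metric.eball a q ∩ Metric.eball b r) =
          ENNReal.ofReal (min (min (2 * q) (2 * r)) (q + r - |a - b|)) := by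
        rw [Metric.eball_coe, Metric.eball_coe, Real.ball_eq_Ioo, Real.ball_eq_Ioo, Ioo_inter_Ioo,
          Real.volume_Ioo]
        congr 1
        grind
      rw [hinter, ENNReal.ofReal_min, ENNReal.ofReal_min, ENNReal.ofReal_sub _ (abs_nonneg _),
        edist_dist, Real.dist_eq]
      simp [ENNReal.ofReal_add, ENNReal.ofReal_mul, ENNReal.ofReal_coe_nnreal]

/-- The measure of the part of `E` within distance `r` of `y`, which is the convolution of the
indicators of `E` and of a centred interval. The radius `∞` accounts for superlevel sets of infinite
measure. -/
def overlap (E : Set ℝ) (r : ℝ≥0∞) (y : ℝ) : ℝ≥0∞ := volume (E ∩ Metric.eball y r)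

lemma measurable_overlap {α : Type*} [MeasurableSpace α] {E : Set ℝ} (hE : MeasurableSet E)
    {r : α → ℝ≥0∞} {y : α → ℝ} (hr : Measurable r) (hy : Measurable y) :
    Measurable fun a => overlap E (r a) (y a) := by
  have hS : MeasurableSet {p : α × ℝ | p.2 ∈ E ∧ edist p.2 (y p.1) < r p.1} :=
    (measurable_snd hE).inter (measurableSet_lt (measurable_snd.edist (hy.comp measurable_fst))
      (hr.comp measurable_fst))
  exact measurable_measure_prodMk_left hS

lemma lintegral_volume_Ioo {α β : ℝ → ℝ} (hα : Measurable α) (hβ : Measurable β) :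
    ∫⁻ y, volume (Ioo (α y) (β y)) = ∫⁻ s, volume {y | α y < s ∧ s < β y} := by
  have hS : MeasurableSet {p : ℝ × ℝ | α p.1 < p.2 ∧ p.2 < β p.1} :=
    (measurableSet_lt (hα.comp measurable_fst) measurable_snd).inter
      (measurableSet_lt measurable_snd (hβ.comp measurable_fst))
  exact (Measure.prod_apply (μ := volume) (ν := volume) hS).symm.trans
    (Measure.prod_apply_symm (μ := volume) (ν := volume) hS)

section Increments

variable {F : ℝ → ℝ}

lemma volume_increment_slice_le (hmono : Monotone F) (hlip : LipschitzWith 1 F) (r s : ℝ) {t : ℝ}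
    (ht : 0 ≤ t) :
    volume {y | F (y - r) < s ∧ s < F (y + r) - t} ≤ ENNReal.ofReal (2 * r - t) := by
  have hgap (x y : ℝ) (hy : F (y - r) < s) (hx : s < F (x + r) - t) : y - x ≤ 2 * r - t := by
    have hlt : y - r < x + r := hmono.reflect_lt (by linarith)
    have hdist := hlip.dist_le_mul (x + r) (y - r)
    rw [Real.dist_eq, Real.dist_eq, abs_of_pos (sub_pos.2 hlt), NNReal.coe_one, one_mul] at hdist
    linarith [le_abs_self (F (x + r) - F (y - r))]
  refine (Real.volume_le_diam _).trans (Metric.ediam_le fun x hx y hy => ?_)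
  rw [edist_dist, Real.dist_eq]
  refine ENNReal.ofReal_le_ofReal (abs_le'.2 ⟨hgap y x hx.1 hy.2, ?_⟩)
  rw [neg_sub]
  exact hgap x y hy.1 hx.2

/-- Measure the region `F (y - r) < s < F (y + r) - t` by its slices of constant `s`. -/
lemma lintegral_increment_sub_le (hmono : Monotone F) (hlip : LipschitzWith 1 F)
    {m : ℝ} (hF : ∀ x, F x ∈ Icc 0 m) (r : ℝ) {t : ℝ} (ht : 0 ≤ t) :
    ∫⁻ y, ENNReal.ofReal (F (y + r) - F (y - r) - t) ≤
      ENNReal.ofReal (2 * r - t) * ENNReal.ofReal (m - t) := by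
  have hFm := hmono.measurable
  have hempty (s : ℝ) (hs : s ∉ Ioo 0 (m - t)) : {y | F (y - r) < s ∧ s < F (y + r) - t} = ∅ :=
    eq_empty_of_forall_notMem fun y hy =>
      hs ⟨(hF _).1.trans_lt hy.1, hy.2.trans_le (sub_le_sub_right (hF _).2 _)⟩
  calc ∫⁻ y, ENNReal.ofReal (F (y + r) - F (y - r) - t)
      = ∫⁻ y, volume (Ioo (F (y - r)) (F (y + r) - t)) := by
        simp_rw [Real.volume_Ioo, sub_right_comm]
    _ = ∫⁻ s, volume {y | F (y - r) < s ∧ s < F (y + r) - t} :=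
        lintegral_volume_Ioo (by fun_prop) (by fun_prop)
    _ = ∫⁻ s in Ioo 0 (m - t), volume {y | F (y - r) < s ∧ s < F (y + r) - t} := by
        rw [← lintegral_indicator measurableSet_Ioo, indicator_eq_self.2 fun s hs => ?_]
        by_contra hsI
        exact hs (by simp only [hempty s hsI, measure_empty])
    _ ≤ ∫⁻ _ in Ioo 0 (m - t), ENNReal.ofReal (2 * r - t) :=
        lintegral_mono fun s => volume_increment_slice_le hmono hlip r s ht
    _ = ENNReal.ofReal (2 * r - t) * ENNReal.ofReal (m - t) := by
        rw [setLIntegral_const, Real.volume_Ioo, sub_zero]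

end Increments

section Overlap

variable {E : Set ℝ}

lemma volume_real_inter_Iic_sub (hE : volume E ≠ ∞) {a b : ℝ} (hab : a ≤ b) :
    volume.real (E ∩ Iic b) - volume.real (E ∩ Iic a) = volume.real (E ∩ Ioc a b) := by
  have hsplit : volume.real (E ∩ Iic b ∩ Iic a) + volume.real ((E ∩ Iic b) \ Iic a) =
      volume.real (E ∩ Iic b) :=
    measureReal_inter_add_sdiff measurableSet_Iic
      (measure_ne_top_of_subset inter_subset_left hE)
  rw [inter_assoc, Iic_inter_Iic, min_eq_right hab, inter_sdiff_assoc, Iic_sdiff_Iic] at hsplit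
  exact sub_eq_of_eq_add' hsplit.symm

lemma monotone_volume_real_inter_Iic (hE : volume E ≠ ∞) :
    Monotone fun x => volume.real (E ∩ Iic x) := fun _ _ hab =>
  measureReal_mono (by gcongr) (measure_ne_top_of_subset inter_subset_left hE)

lemma lipschitzWith_volume_real_inter_Iic (hE : volume E ≠ ∞) :
    LipschitzWith 1 fun x => volume.real (E ∩ Iic x) :=
  LipschitzWith.of_le_add fun b a => by
    rcases le_total a b with hab | hba
    · have hle : volume.real (E ∩ Ioc a b) ≤ b - a :=
        (measureReal_mono inter_subset_right (by simp)).trans_eq (Real.volume_real_Ioc_of_le hab)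
      rw [← volume_real_inter_Iic_sub hE hab] at hle
      rw [Real.dist_eq, abs_of_nonneg (sub_nonneg.2 hab)]
      linarith
    · exact (monotone_volume_real_inter_Iic hE hba).trans (le_add_of_nonneg_right dist_nonneg)

lemma overlap_eq_ofReal_sub (hE : volume E ≠ ∞) (r : ℝ≥0) (y : ℝ) :
    overlap E r y =
      ENNReal.ofReal (volume.real (E ∩ Iic (y + r)) - volume.real (E ∩ Iic (y - r))) := by
  rw [volume_real_inter_Iic_sub hE (by linarith [r.coe_nonneg]), overlap, Metric.eball_coe,
    Real.ball_eq_Ioo, ofReal_measureReal (measure_ne_top_of_subset inter_subset_left hE)]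
  exact measure_congr ((ae_eq_refl E).inter Ioo_ae_eq_Ioc)

lemma lintegral_overlap_sub_le (hE : volume E ≠ ∞) (r t : ℝ≥0) :
    ∫⁻ y, (overlap E r y - t) ≤ (2 * r - t) * (volume E - t) := by
  have hF (x : ℝ) : volume.real (E ∩ Iic x) ∈ Icc 0 (volume.real E) :=
    ⟨measureReal_nonneg, measureReal_mono inter_subset_left hE⟩
  have h := lintegral_increment_sub_le (monotone_volume_real_inter_Iic hE)
    (lipschitzWith_volume_real_inter_Iic hE) hF r t.coe_nonneg
  simp_rw [ENNReal.ofReal_sub _ t.coe_nonneg, ← overlap_eq_ofReal_sub hE] at h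
  simpa [ofReal_measureReal hE, ENNReal.ofReal_mul] using h

lemma le_lintegral_overlap_eball_sub (q r t : ℝ≥0) :
    (2 * r - t) * (2 * q - t) ≤ ∫⁻ y, (overlap (Metric.eball 0 q) r y - t : ℝ≥0∞) := by
  have hslice (s : ℝ) (hs : s ∈ Ioo (-(q : ℝ)) (q - t)) :
      Ioo (s + t - r) (s + r) ⊆ {y | max (-(q : ℝ)) (y - r) < s ∧ s < min (q : ℝ) (y + r) - t} :=
    fun y hy => by
      simp only [mem_ofPred_eq, max_lt_iff, lt_sub_iff_add_lt, lt_min_iff, mem_Ioo] at *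
      refine ⟨⟨?_, ?_⟩, ?_, ?_⟩ <;> linarith
  calc (2 * r - t : ℝ≥0∞) * (2 * q - t)
      = ∫⁻ s in Ioo (-(q : ℝ)) (q - t), volume (Ioo (s + t - r) (s + r)) := by
        have (s : ℝ) : s + r - (s + t - r) = 2 * r - t := by ring
        simp_rw [Real.volume_Ioo, this]
        rw [setLIntegral_const, Real.volume_Ioo, sub_neg_eq_add, sub_add_eq_add_sub, ← two_mul,
          ENNReal.ofReal_sub _ t.coe_nonneg, ENNReal.ofReal_sub _ t.coe_nonneg]
        simp [ENNReal.ofReal_mul]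
    _ ≤ ∫⁻ s in Ioo (-(q : ℝ)) (q - t),
          volume {y | max (-(q : ℝ)) (y - r) < s ∧ s < min (q : ℝ) (y + r) - t} :=
        setLIntegral_mono' measurableSet_Ioo fun s hs => measure_mono (hslice s hs)
    _ ≤ ∫⁻ s, volume {y | max (-(q : ℝ)) (y - r) < s ∧ s < min (q : ℝ) (y + r) - t} :=
        setLIntegral_le_lintegral _ _
    _ = ∫⁻ y, volume (Ioo (max (-(q : ℝ)) (y - r)) (min (q : ℝ) (y + r) - t)) :=
        (lintegral_volume_Ioo (by fun_prop) (by fun_prop)).symm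
    _ = ∫⁻ y, (overlap (Metric.eball 0 q) r y - t) := by
        refine lintegral_congr fun y => ?_
        rw [overlap, Metric.eball_coe, Metric.eball_coe, Real.ball_eq_Ioo, Real.ball_eq_Ioo,
          Ioo_inter_Ioo, Real.volume_Ioo, Real.volume_Ioo, sub_right_comm,
          ENNReal.ofReal_sub _ t.coe_nonneg, ENNReal.ofReal_coe_nnreal, zero_sub, zero_add]

end Overlap

section Majorization

variable {f F g G : ℝ → ℝ≥0∞}

lemma volume_ofReal_two_mul_abs_lt_inter_Ioo (d : ℝ≥0∞) (ρ : ℝ) :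
    volume ({x : ℝ | ENNReal.ofReal (2 * |x|) < d} ∩ Ioo (-ρ) ρ) =
      min (ENNReal.ofReal (2 * ρ)) d := by
  have hball : {x : ℝ | ENNReal.ofReal (2 * |x|) < d} ∩ Ioo (-ρ) ρ =
      Metric.eball 0 (min (d / 2) (ENNReal.ofReal ρ)) := by
    ext x
    rw [Metric.mem_eball, lt_min_iff, edist_dist, dist_zero_right, Real.norm_eq_abs,
      ENNReal.lt_div_iff_mul_lt (.inl two_ne_zero) (.inl ENNReal.ofNat_ne_top), mul_comm,
      ENNReal.ofReal_lt_ofReal_iff_of_nonneg (abs_nonneg x), abs_lt, ← ENNReal.ofReal_ofNat 2,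
      ← ENNReal.ofReal_mul zero_le_two]
    rfl
  rw [hball, Real.volume_eball, mul_min, ENNReal.mul_div_cancel two_ne_zero ENNReal.ofNat_ne_top,
    ENNReal.ofReal_mul zero_le_two, ENNReal.ofReal_ofNat, min_comm]

lemma lintegral_Ioo_sdr (f : ℝ → ℝ≥0∞) (ρ : ℝ) :
    ∫⁻ x in Ioo (-ρ) ρ, sdr f x = topMass volume f (ENNReal.ofReal (2 * ρ)) := by
  have hS : MeasurableSet {p : ℝ × ℝ | ENNReal.ofReal (2 * |p.1|) < distr volume f p.2} :=
    measurableSet_lt (by fun_prop) (by fun_prop)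
  calc ∫⁻ x in Ioo (-ρ) ρ, sdr f x
      = ∫⁻ u in Ioi (0 : ℝ), ∫⁻ x in Ioo (-ρ) ρ,
          if ENNReal.ofReal (2 * |x|) < distr volume f u then 1 else 0 :=
        lintegral_lintegral_swap (Measurable.ite hS measurable_const measurable_const).aemeasurable
    _ = ∫⁻ u in Ioi (0 : ℝ),
          volume ({x : ℝ | ENNReal.ofReal (2 * |x|) < distr volume f u} ∩ Ioo (-ρ) ρ) :=
        lintegral_congr fun u => by
          have hu : MeasurableSet {x : ℝ | ENNReal.ofReal (2 * |x|) < distr volume f u} :=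
            measurableSet_lt (by fun_prop) measurable_const
          rw [← Measure.restrict_apply hu, ← lintegral_indicator_one hu]
          exact lintegral_congr fun x => by simp only [indicator_apply, mem_ofPred_eq, Pi.one_apply]
    _ = topMass volume f (ENNReal.ofReal (2 * ρ)) := by
        simp_rw [volume_ofReal_two_mul_abs_lt_inter_Ioo, topMass]

lemma majorizesE_iff_topMass_le :
    MajorizesE F f ↔ ∀ s, s ≠ ∞ → topMass volume f s ≤ topMass volume F s := by
  simp_rw [MajorizesE, lintegral_Ioo_sdr]
  refine ⟨fun h s hs => ?_, fun h ρ _ => h _ ENNReal.ofReal_ne_top⟩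
  have hρ := h (s.toReal / 2) (by positivity)
  rwa [mul_div_cancel₀ _ two_ne_zero, ENNReal.ofReal_toReal hs] at hρ

/-- The Hardy–Littlewood–Pólya description of majorization, by the excess over each level. -/
lemma majorizesE_iff_lintegral_sub_le (hf : Measurable f) (hF : Measurable F) :
    MajorizesE F f ↔ ∀ t : ℝ≥0, ∫⁻ x, (f x - t) ≤ ∫⁻ x, (F x - t) :=
  ⟨fun h => lintegral_sub_le_of_forall_setLIntegral_le_topMass hf hF fun E _ hE =>
      (setLIntegral_le_topMass hf E).trans (majorizesE_iff_topMass_le.1 h _ hE),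
    fun h => majorizesE_iff_topMass_le.2 fun s _ => topMass_le_of_lintegral_sub_le hf hF h s⟩

lemma majorizesE_of_setLIntegral_le_topMass (hf : Measurable f) (hF : Measurable F)
    (h : ∀ E, MeasurableSet E → volume E ≠ ∞ → ∫⁻ x in E, f x ≤ topMass volume F (volume E)) :
    MajorizesE F f :=
  (majorizesE_iff_lintegral_sub_le hf hF).2
    (lintegral_sub_le_of_forall_setLIntegral_le_topMass hf hF h)

lemma MajorizesE.topMass_le (h : MajorizesE F f) (hf : Measurable f) (hF : Measurable F)
    (s : ℝ≥0∞) : topMass volume f s ≤ topMass volume F s :=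
  topMass_le_of_lintegral_sub_le hf hF ((majorizesE_iff_lintegral_sub_le hf hF).1 h) s

lemma MajorizesE.lintegral_mul_le (h : MajorizesE F f) (h' : MajorizesE G g) (hf : Measurable f)
    (hg : Measurable g) {c : ℝ} (hF : ASUE c F) (hG : ASUE c G) :
    ∫⁻ x, f x * g x ≤ ∫⁻ x, F x * G x :=
  calc ∫⁻ x, f x * g x ≤ ∫⁻ u in Ioi (0 : ℝ), topMass volume f (distr volume g u) :=
        lintegral_mul_le_lintegral_topMass hf hg
    _ ≤ ∫⁻ u in Ioi (0 : ℝ), topMass volume F (distr volume g u) :=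
        lintegral_mono fun _ => h.topMass_le hf hF.measurable _
    _ = ∫⁻ u in Ioi (0 : ℝ), topMass volume g (distr volume F u) :=
        lintegral_topMass_distr_comm volume F g
    _ ≤ ∫⁻ u in Ioi (0 : ℝ), topMass volume G (distr volume F u) :=
        lintegral_mono fun _ => h'.topMass_le hg hG.measurable _
    _ = ∫⁻ u in Ioi (0 : ℝ), topMass volume F (distr volume G u) :=
        (lintegral_topMass_distr_comm volume F G).symm
    _ = ∫⁻ x, F x * G x :=
        (lintegral_mul_eq_lintegral_topMass_of_monovary hF.measurable hG.measurable
          (hF.monovary hG)).symm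

end Majorization

lemma asue_overlap_eball (c : ℝ) (q r : ℝ≥0∞) : ASUE c (overlap (Metric.eball c q) r) :=
  asue_iff.2 fun x y hxy => by
    have hdist : edist c x ≤ edist c y := by
      simpa only [edist_dist, dist_comm c, Real.dist_eq] using ENNReal.ofReal_le_ofReal hxy
    rw [overlap, overlap, volume_eball_inter_eball, volume_eball_inter_eball]
    gcongr

lemma volume_eball_volume_div_two (c : ℝ) (E : Set ℝ) :
    volume (Metric.eball c (volume E / 2)) = volume E := by
  rw [Real.volume_eball, ENNReal.mul_div_cancel two_ne_zero ENNReal.ofNat_ne_top]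

/-- Riesz's rearrangement inequality for three sets: the third set enters when both sides are
paired with a function by `MajorizesE.lintegral_mul_le`. -/
lemma majorizesE_overlap {E : Set ℝ} (hEm : MeasurableSet E) (hE : volume E ≠ ∞) (r : ℝ≥0∞) :
    MajorizesE (overlap (Metric.eball 0 (volume E / 2)) r) (overlap E r) := by
  refine (majorizesE_iff_lintegral_sub_le (measurable_overlap hEm measurable_const measurable_id)
    (asue_overlap_eball 0 _ r).measurable).2 fun t => ?_
  induction r with
  | top => simp only [overlap, Metric.eball_top_eq_univ, inter_univ, volume_eball_volume_div_two,
      le_refl]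
  | coe r =>
    set q := (volume E / 2).toNNReal
    have hq : (q : ℝ≥0∞) = volume E / 2 :=
      ENNReal.coe_toNNReal (ENNReal.div_ne_top hE two_ne_zero)
    calc ∫⁻ y, (overlap E r y - t) ≤ (2 * r - t) * (volume E - t) :=
          lintegral_overlap_sub_le hE r t
      _ = (2 * r - t) * (2 * q - t) := by
          rw [hq, ENNReal.mul_div_cancel two_ne_zero ENNReal.ofNat_ne_top]
      _ ≤ ∫⁻ y, (overlap (Metric.eball 0 (volume E / 2)) r y - t) := by
          rw [← hq]
          exact le_lintegral_overlap_eball_sub q r t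

section Convolution

variable {c d : ℝ} {f g F : ℝ → ℝ≥0∞}

lemma distr_comp_neg_add (hg : Measurable g) (y u : ℝ) :
    distr volume (fun x => g (-y + x)) u = distr volume g u :=
  (measurePreserving_add_left volume (-y)).measure_preimage
    (measurableSet_ofReal_lt hg u).nullMeasurableSet

lemma distr_comp_neg_add_left (hg : Measurable g) (x u : ℝ) :
    distr volume (fun y => g (-y + x)) u = distr volume g u :=
  have hreflect : MeasurePreserving (fun y => -y + x) volume volume :=
    (measurePreserving_add_right volume x).comp (Measure.measurePreserving_neg volume)
  hreflect.measure_preimage (measurableSet_ofReal_lt hg u).nullMeasurableSet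

lemma lconvolution_eq_lintegral_overlap (hf : ASUE c f) (hg : ASUE d g) (x : ℝ) :
    (f ⋆ₗ g) x = ∫⁻ u in Ioi (0 : ℝ), ∫⁻ v in Ioi (0 : ℝ),
      overlap (Metric.eball c (distr volume f v / 2)) (distr volume g u / 2) (x - d) := by
  have hgx := hg.comp_neg_add_left x
  rw [lconvolution_def, lintegral_mul_eq_lintegral_setLIntegral hf.measurable hgx.measurable]
  refine lintegral_congr fun u => ?_
  rw [setLIntegral_eq_lintegral_measure_inter hf.measurable]
  refine lintegral_congr fun v => measure_congr ?_
  rw [← distr_comp_neg_add_left hg.measurable x u]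
  exact (hf.superlevel_ae_eq_eball _).inter (hgx.superlevel_ae_eq_eball _)

lemma ASUE.lconvolution (hf : ASUE c f) (hg : ASUE d g) : ASUE (c + d) (f ⋆ₗ g) :=
  asue_iff.2 fun x z hxz => by
    rw [add_comm c, ← sub_sub, ← sub_sub] at hxz
    rw [lconvolution_eq_lintegral_overlap hf hg, lconvolution_eq_lintegral_overlap hf hg]
    exact lintegral_mono fun u => lintegral_mono fun v =>
      asue_iff.1 (asue_overlap_eball c _ _) _ _ hxz

lemma setLIntegral_comp_neg_add (hg : ASUE 0 g) (E : Set ℝ) (y : ℝ) :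
    ∫⁻ x in E, g (-y + x) = ∫⁻ u in Ioi (0 : ℝ), overlap E (distr volume g u / 2) y := by
  have hgy : ASUE y fun x => g (-y + x) := by simpa only [add_zero] using hg.comp_neg_add y
  rw [setLIntegral_eq_lintegral_measure_inter hgy.measurable]
  refine lintegral_congr fun u => ?_
  rw [inter_comm, overlap, ← distr_comp_neg_add hg.measurable y u]
  exact measure_congr ((ae_eq_refl E).inter (hgy.superlevel_ae_eq_eball _))

lemma setLIntegral_lconvolution {E : Set ℝ} (hE : MeasurableSet E) (hf : Measurable f)
    (hg : ASUE 0 g) :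
    ∫⁻ x in E, (f ⋆ₗ g) x =
      ∫⁻ u in Ioi (0 : ℝ), ∫⁻ y, f y * overlap E (distr volume g u / 2) y := by
  have hgm := hg.measurable
  have hov : Measurable fun p : ℝ × ℝ => overlap E (distr volume g p.2 / 2) p.1 :=
    measurable_overlap hE (by fun_prop) measurable_fst
  calc ∫⁻ x in E, (f ⋆ₗ g) x = ∫⁻ y, ∫⁻ x in E, f y * g (-y + x) := by
        simp_rw [lconvolution_def]
        exact lintegral_lintegral_swap (by fun_prop)
    _ = ∫⁻ y, f y * ∫⁻ u in Ioi (0 : ℝ), overlap E (distr volume g u / 2) y :=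
        lintegral_congr fun y => by
          rw [lintegral_const_mul _ (by fun_prop), setLIntegral_comp_neg_add hg]
    _ = ∫⁻ y, ∫⁻ u in Ioi (0 : ℝ), f y * overlap E (distr volume g u / 2) y :=
        lintegral_congr fun y =>
          (lintegral_const_mul (f y) (hov.comp measurable_prodMk_left)).symm
    _ = ∫⁻ u in Ioi (0 : ℝ), ∫⁻ y, f y * overlap E (distr volume g u / 2) y :=
        lintegral_lintegral_swap ((hf.comp measurable_fst).mul hov).aemeasurable

lemma MajorizesE.lconvolution (h : MajorizesE F f) (hf : Measurable f) (hF : ASUE 0 F)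
    (hg : ASUE 0 g) : MajorizesE (F ⋆ₗ g) (f ⋆ₗ g) := by
  refine majorizesE_of_setLIntegral_le_topMass (measurable_lconvolution _ hf hg.measurable)
    (hF.lconvolution hg).measurable fun E hEm hE => ?_
  set B := Metric.eball (0 : ℝ) (volume E / 2)
  calc ∫⁻ x in E, (f ⋆ₗ g) x
      = ∫⁻ u in Ioi (0 : ℝ), ∫⁻ y, f y * overlap E (distr volume g u / 2) y :=
        setLIntegral_lconvolution hEm hf hg
    _ ≤ ∫⁻ u in Ioi (0 : ℝ), ∫⁻ y, F y * overlap B (distr volume g u / 2) y :=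
        lintegral_mono fun u => h.lintegral_mul_le (majorizesE_overlap hEm hE _) hf
          (measurable_overlap hEm measurable_const measurable_id) hF (asue_overlap_eball 0 _ _)
    _ = ∫⁻ x in B, (F ⋆ₗ g) x :=
        (setLIntegral_lconvolution measurableSet_eball hF.measurable hg).symm
    _ ≤ topMass volume (F ⋆ₗ g) (volume B) :=
        setLIntegral_le_topMass (hF.lconvolution hg).measurable B
    _ = topMass volume (F ⋆ₗ g) (volume E) := by rw [volume_eball_volume_div_two]

end Convolution

section Dilation

variable {f F : ℝ → ℝ≥0∞}

/-- The density of `a * X` when `X` has density `f`. -/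
def dilate (a : ℝ) (f : ℝ → ℝ≥0∞) (x : ℝ) : ℝ≥0∞ := ENNReal.ofReal (1 / |a|) * f (x / a)

lemma measurable_dilate (hf : Measurable f) (a : ℝ) : Measurable (dilate a f) := by
  unfold dilate
  fun_prop

lemma ASUE.dilate {a c : ℝ} (hf : ASUE c f) (ha : a ≠ 0) : ASUE (a * c) (dilate a f) :=
  asue_iff.2 fun x y hxy => by
    have hscale (z : ℝ) : |z / a - c| = |z - a * c| / |a| := by
      rw [← abs_div, sub_div, mul_div_cancel_left₀ _ ha]
    refine mul_le_mul_right (asue_iff.1 hf _ _ ?_) _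
    rw [hscale, hscale]
    gcongr

lemma lintegral_dilate {a : ℝ} (ha : a ≠ 0) (hf : Measurable f) :
    ∫⁻ x, dilate a f x = ∫⁻ x, f x := by
  have hmap : ∫⁻ x, f (x / a) = ENNReal.ofReal |a| * ∫⁻ x, f x := by
    rw [← lintegral_map hf (by fun_prop : Measurable fun x : ℝ => x / a)]
    simp_rw [div_eq_mul_inv]
    rw [Real.map_volume_mul_right (inv_ne_zero ha), inv_inv, lintegral_smul_measure, smul_eq_mul]
  unfold dilate
  rw [lintegral_const_mul _ (by fun_prop), hmap, ← mul_assoc, ← ENNReal.ofReal_mul (by positivity),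
    one_div_mul_cancel (abs_ne_zero.2 ha), ENNReal.ofReal_one, one_mul]

lemma lintegral_dilate_sub {a : ℝ} (ha : a ≠ 0) (hf : Measurable f) (t : ℝ≥0) :
    ∫⁻ x, (dilate a f x - t) = ∫⁻ x, (f x - (‖a‖₊ * t : ℝ≥0)) := by
  have hscale : ENNReal.ofReal (1 / |a|) * (‖a‖₊ * t : ℝ≥0) = t := by
    rw [ENNReal.coe_mul, ← mul_assoc, ← enorm_eq_nnnorm, Real.enorm_eq_ofReal_abs,
      ← ENNReal.ofReal_mul (by positivity), one_div_mul_cancel (abs_ne_zero.2 ha),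
      ENNReal.ofReal_one, one_mul]
  rw [← lintegral_dilate ha (hf.sub_const _)]
  refine lintegral_congr fun x => ?_
  rw [dilate, dilate, ENNReal.mul_sub fun _ _ => ENNReal.ofReal_ne_top, hscale]

lemma MajorizesE.dilate (h : MajorizesE F f) (hf : Measurable f) (hF : Measurable F) {a : ℝ}
    (ha : a ≠ 0) : MajorizesE (dilate a F) (dilate a f) := by
  refine (majorizesE_iff_lintegral_sub_le (measurable_dilate hf a) (measurable_dilate hF a)).2
    fun t => ?_
  rw [lintegral_dilate_sub ha hf, lintegral_dilate_sub ha hF]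
  exact (majorizesE_iff_lintegral_sub_le hf hF).1 h _

end Dilation

theorem stmt5_general (ξ π μ : ℝ → ℝ≥0∞) (a : ℝ) (ha : a ≠ 0) (hπ : Measurable π)
    (hξA : ASUE 0 ξ) (hμA : ASUE 0 μ) (hmaj : MajorizesE ξ π) :
    ASUE 0 (fun x => ∫⁻ w, ENNReal.ofReal (1 / |a|) * ξ ((x - w) / a) * μ w) ∧
    MajorizesE (fun x => ∫⁻ w, ENNReal.ofReal (1 / |a|) * ξ ((x - w) / a) * μ w)
      (fun x => ∫⁻ w, ENNReal.ofReal (1 / |a|) * π ((x - w) / a) * μ w) := by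
  have hconv (f : ℝ → ℝ≥0∞) :
      (fun x => ∫⁻ w, ENNReal.ofReal (1 / |a|) * f ((x - w) / a) * μ w) = dilate a f ⋆ₗ μ := by
    ext x
    rw [lconvolution_comm, lconvolution_def]
    refine lintegral_congr fun w => ?_
    rw [mul_comm, ← sub_eq_neg_add, dilate]
  have hξ : ASUE 0 (dilate a ξ) := by simpa only [mul_zero] using hξA.dilate ha
  rw [hconv ξ, hconv π]
  refine ⟨by simpa only [add_zero] using hξ.lconvolution hμA, ?_⟩
  exact (hmaj.dilate hπ hξA.measurable ha).lconvolution (measurable_dilate hπ a) hξ hμA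

/-- Property 5: the pre-transmission belief update `F¹(π) = π̃ ⋆ μ` (with
`π̃(x) = (1/|a|) π(x/a)`) preserves SU majorization. -/
theorem stmt5 (ξ π μ : ℝ → ℝ≥0) (a : ℝ) (ha : a ≠ 0)
    (hξ : IsPdf ξ) (hπ : IsPdf π) (hμ : IsPdf μ)
    (hξA : ASU 0 ξ) (hμA : ASU 0 μ) (hmaj : Majorizes ξ π) :
    ASUE 0 (fun x => ∫⁻ w,
      ENNReal.ofReal (1 / |a|) * (ξ ((x - w) / a) : ℝ≥0∞) * (μ w : ℝ≥0∞)) ∧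
    MajorizesE
      (fun x => ∫⁻ w,
        ENNReal.ofReal (1 / |a|) * (ξ ((x - w) / a) : ℝ≥0∞) * (μ w : ℝ≥0∞))
      (fun x => ∫⁻ w,
        ENNReal.ofReal (1 / |a|) * (π ((x - w) / a) : ℝ≥0∞) * (μ w : ℝ≥0∞)) :=
  stmt5_general _ _ _ a ha hπ.1.coe_nnreal_ennreal hξA.asue hμA.asue hmaj
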